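/- Let d ≥ 2 be an integer, let F_0, F_1, …, F_r ∈ R[t_0,…,t_r] be homogeneous polynomials of degree d all of whose coefficients lie in A, and let G_0, G_1, …, G_r ∈ R[t_0,…,t_r] be homogeneous polynomials of degree d all of whose coefficients lie in B, satisfying σ_ω(F_0) = G_0 and σ_ω(F_i) = G_i + ω·G_{i−1} for i = 1, …, r. Then the coefficient of t_r^{d−1}·t_j in F_i is zero for every 0 ≤ i ≤ r and every i ≤ j ≤ r (where for j = r this coefficient is the coefficient of t_r^d), and the coefficient of t_r^{d−1}·t_j in G_i is zero for every 0 ≤ i ≤ r and every i+1 ≤ j ≤ r. -/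

import Mathlib

open MvPolynomial Finset

/-- The `R`-algebra endomorphism `σ_ω` of `R[t_0, …, t_r]` determined by
`σ_ω(t_0) = t_0` and `σ_ω(t_i) = t_i + ω·t_{i-1}` for `1 ≤ i ≤ r`. -/
noncomputable def sigmaOmega {R : Type*} [CommRing R] {r : ℕ} (ω : R) :
    MvPolynomial (Fin (r + 1)) R →ₐ[R] MvPolynomial (Fin (r + 1)) R :=
  aeval fun i : Fin (r + 1) =>
    if i.1 = 0 then X i
    else X i + C ω * X ⟨i.1 - 1, lt_of_le_of_lt (Nat.sub_le _ _) i.isLt⟩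

/-- Chain rule for algebra substitutions. -/
lemma pderiv_aeval_chain {R : Type*} [CommRing R] {n : ℕ}
    (f : Fin n → MvPolynomial (Fin n) R) (k : Fin n) (p : MvPolynomial (Fin n) R) :
    pderiv k (aeval f p) = ∑ j, aeval f (pderiv j p) * pderiv k (f j) := by
  induction p using MvPolynomial.induction_on with
  | C a => simp [← MvPolynomial.algebraMap_eq]
  | add p q hp hq => simp only [map_add, hp, hq, add_mul, Finset.sum_add_distrib]
  | mul_X p n h =>
    simp only [Derivation.leibniz, map_mul, aeval_X, h, smul_eq_mul, pderiv_X, map_add, add_mul,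
      Finset.sum_add_distrib, Finset.mul_sum]
    congr 1
    · rw [Finset.sum_eq_single n]
      · simp
      · intro b _ hb
        simp [hb, Pi.single_apply, hb.symm]
      · simp
    · exact Finset.sum_congr rfl fun x _ => by ring

/-- The matrix of `σ_ω`. -/
def sigMat {R : Type*} [CommRing R] (r : ℕ) (ω : R) : Matrix (Fin (r + 1)) (Fin (r + 1)) R :=
  Matrix.of fun i j => if i = j then 1 else if i.1 = j.1 + 1 then ω else 0

lemma pderiv_sigma_X {R : Type*} [CommRing R] (r : ℕ) (ω : R) (j k : Fin (r + 1)) :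
    pderiv k (if j.1 = 0 then X j
    else X j + C ω * X ⟨j.1 - 1, lt_of_le_of_lt (Nat.sub_le _ _) j.isLt⟩) =
      (C (sigMat r ω j k) : MvPolynomial (Fin (r + 1)) R) := by
  unfold sigMat
  split_ifs with h
  · simp only [pderiv_X, Pi.single_apply, Matrix.of_apply]
    split_ifs <;> first | omega | simp
  · simp only [map_add, pderiv_C_mul, pderiv_X, Pi.single_apply, Matrix.of_apply, Fin.ext_iff]
    split_ifs <;> first | omega | simp

lemma pderiv_sigma {R : Type*} [CommRing R] (r : ℕ) (ω : R) (k : Fin (r + 1))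
    (p : MvPolynomial (Fin (r + 1)) R) :
    pderiv k (sigmaOmega ω p) = ∑ j, sigmaOmega ω (pderiv j p) * C (sigMat r ω j k) := by
  unfold sigmaOmega
  rw [pderiv_aeval_chain]
  exact Finset.sum_congr rfl fun j _ => by rw [pderiv_sigma_X]

lemma sigMat_det {R : Type*} [CommRing R] (r : ℕ) (ω : R) : (sigMat r ω).det = 1 := by
  rw [Matrix.det_of_lowerTriangular]
  · simp [sigMat]
  · intro i j hij
    have : i < j := by simpa using hij
    simp only [sigMat, Matrix.of_apply]
    rw [if_neg (by omega), if_neg (by omega)]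

lemma sum_sigMat_left {R : Type*} [CommRing R] (r : ℕ) (ω : R) (i : Fin (r + 1))
    {M : Type*} [CommRing M] (φ : R →+* M) (f : Fin (r + 1) → M) :
    ∑ j, φ (sigMat r ω i j) * f j = f i + if i.1 = 0 then 0 else
      φ ω * f ⟨i.1 - 1, lt_of_le_of_lt (Nat.sub_le _ _) i.isLt⟩ := by
  have h1 : ∀ j, φ (sigMat r ω i j) * f j = (if i = j then f j else 0) +
      (if i.1 = j.1 + 1 then φ ω * f j else 0) := by
    intro j
    simp only [sigMat, Matrix.of_apply]
    split_ifs <;> first | omega | simp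
  simp only [h1, Finset.sum_add_distrib]
  congr 1
  · simp
  · split_ifs with h
    · exact Finset.sum_eq_zero fun j _ => if_neg (by omega)
    · rw [Finset.sum_eq_single ⟨i.1 - 1, lt_of_le_of_lt (Nat.sub_le _ _) i.isLt⟩]
      · rw [if_pos (by simp; omega)]
      · intro b _ hb
        rw [if_neg]
        intro h2
        exact hb (Fin.ext (by simp; omega))
      · simp

lemma sum_sigMat_right {R : Type*} [CommRing R] (r : ℕ) (ω : R) (k : Fin (r + 1))
    (f : Fin (r + 1) → R) :
    ∑ j, f j * sigMat r ω j k = f k + ω * if h : k.1 + 1 < r + 1 then f ⟨k.1 + 1, h⟩ else 0 := by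
  have h1 : ∀ j, f j * sigMat r ω j k = (if j = k then f j else 0) +
      (if j.1 = k.1 + 1 then ω * f j else 0) := by
    intro j
    simp only [sigMat, Matrix.of_apply]
    split_ifs <;> first | omega | simp [mul_comm]
  simp only [h1, Finset.sum_add_distrib]
  congr 1
  · simp
  · split_ifs with h
    · rw [Finset.sum_eq_single ⟨k.1 + 1, h⟩]
      · simp
      · intro b _ hb
        rw [if_neg]
        intro h2
        exact hb (Fin.ext (by simp; omega))
      · simp
    · rw [mul_zero]
      exact Finset.sum_eq_zero fun j _ => if_neg (by omega)

/-- Divergence is invariant under the change of coordinates. -/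
lemma div_sigma {R : Type*} [CommRing R] (r : ℕ) (ω : R)
    (F G : Fin (r + 1) → MvPolynomial (Fin (r + 1)) R)
    (h : ∀ i, sigmaOmega ω (F i) = ∑ j, C (sigMat r ω i j) * G j) :
    sigmaOmega ω (∑ i, pderiv i (F i)) = ∑ i, pderiv i (G i) := by
  let M : Matrix (Fin (r + 1)) (Fin (r + 1)) (MvPolynomial (Fin (r + 1)) R) :=
    (sigMat r ω).map C
  let JF : Matrix (Fin (r + 1)) (Fin (r + 1)) (MvPolynomial (Fin (r + 1)) R) :=
    Matrix.of fun i j => sigmaOmega ω (pderiv j (F i))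
  let JG : Matrix (Fin (r + 1)) (Fin (r + 1)) (MvPolynomial (Fin (r + 1)) R) :=
    Matrix.of fun i j => pderiv j (G i)
  have hM : IsUnit M.det := by
    have : M.det = C (sigMat r ω).det := by
      rw [RingHom.map_det]; rfl
    rw [this, sigMat_det]; simp
  have hMM : JF * M = M * JG := by
    ext1 i k
    rw [Matrix.mul_apply, Matrix.mul_apply]
    change ∑ j, sigmaOmega ω (pderiv j (F i)) * C (sigMat r ω j k) =
      ∑ j, C (sigMat r ω i j) * pderiv k (G j)
    rw [← pderiv_sigma, h, map_sum]
    exact Finset.sum_congr rfl fun j _ => pderiv_C_mul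
  have hJ : JF = M * JG * M⁻¹ := by
    rw [← hMM, Matrix.mul_assoc, Matrix.mul_nonsing_inv _ hM, Matrix.mul_one]
  have ht : JF.trace = JG.trace := by
    rw [hJ, Matrix.trace_mul_comm, ← Matrix.mul_assoc, Matrix.nonsing_inv_mul _ hM,
      Matrix.one_mul]
  rw [map_sum]
  exact ht

/-- Evaluation of the `j`-th partial derivative at the last basis vector. -/
noncomputable def al {R : Type*} [CommRing R] {r : ℕ} (j : Fin (r + 1))
    (p : MvPolynomial (Fin (r + 1)) R) : R :=
  eval (Pi.single (Fin.last r) 1) (pderiv j p)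

lemma eval_sigma {R : Type*} [CommRing R] {r : ℕ} (ω : R) (p : MvPolynomial (Fin (r + 1)) R) :
    eval (Pi.single (Fin.last r) 1) (sigmaOmega ω p) = eval (Pi.single (Fin.last r) 1) p := by
  unfold sigmaOmega
  induction p using MvPolynomial.induction_on with
  | C a => simp [← MvPolynomial.algebraMap_eq]
  | add p q hp hq => simp only [map_add, hp, hq]
  | mul_X p n h =>
    rw [map_mul, map_mul, h, map_mul, aeval_X]
    congr 1
    split_ifs with h0
    · rfl
    · have : (⟨n.1 - 1, lt_of_le_of_lt (Nat.sub_le _ _) n.isLt⟩ : Fin (r + 1)) ≠ Fin.last r := by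
        intro h
        have := congrArg Fin.val h
        simp at this
        omega
      simp [Pi.single_apply, this]

lemma al_sigma {R : Type*} [CommRing R] {r : ℕ} (ω : R) (k : Fin (r + 1))
    (p : MvPolynomial (Fin (r + 1)) R) :
    al k (sigmaOmega ω p) =
      al k p + ω * if h : k.1 + 1 < r + 1 then al ⟨k.1 + 1, h⟩ p else 0 := by
  rw [← sum_sigMat_right r ω k (fun j => al j p)]
  unfold al
  rw [pderiv_sigma, map_sum]
  exact Finset.sum_congr rfl fun j _ => by rw [map_mul, eval_sigma, eval_C]

lemma eval_hom {R : Type*} [CommRing R] {r : ℕ} {d : ℕ} (p : MvPolynomial (Fin (r + 1)) R)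
    (hp : p.IsHomogeneous d) :
    eval (Pi.single (Fin.last r) 1) p = coeff (Finsupp.single (Fin.last r) d) p := by
  rw [eval_eq']
  rw [Finset.sum_eq_single (Finsupp.single (Fin.last r) d)]
  · rw [Finset.prod_eq_one, mul_one]
    intro i _
    by_cases h : i = Fin.last r
    · subst h; simp
    · simp [Finsupp.single_apply, Ne.symm h]
  · intro m hm hne
    have hdeg : m.degree = d := by
      have := hp (mem_support_iff.mp hm)
      rw [Finsupp.degree_eq_weight_one]
      exact this
    have : ∃ i, i ≠ Fin.last r ∧ m i ≠ 0 := by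
      by_contra! hcon
      apply hne
      have h1 : m = Finsupp.single (Fin.last r) (m (Fin.last r)) := by
        ext i
        by_cases h : i = Fin.last r
        · subst h; simp
        · simp [Finsupp.single_apply, Ne.symm h, hcon i h]
      rw [h1] at hdeg ⊢
      simp at hdeg
      simp [hdeg]
    obtain ⟨i, hi, hmi⟩ := this
    rw [Finset.prod_eq_zero (Finset.mem_univ i), mul_zero]
    simp [hi, hmi]
  · intro h
    simp [notMem_support_iff.mp h]

lemma al_hom {R : Type*} [CommRing R] {r : ℕ} {d : ℕ} (p : MvPolynomial (Fin (r + 1)) R)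
    (hp : p.IsHomogeneous d) (j : Fin (r + 1)) :
    al j p = coeff (Finsupp.single (Fin.last r) (d - 1) + Finsupp.single j 1) p *
      (((Finsupp.single (Fin.last r) (d - 1) j + 1 : ℕ)) : R) := by
  unfold al
  rw [eval_hom (d := d - 1) _ hp.pderiv, coeff_pderiv]
  push_cast
  rfl

lemma nat_mul_zero (K : Type*) {R : Type*} [Field K] [CharZero K] [CommRing R] [Algebra K R]
    (x : R) (n : ℕ) (hn : n ≠ 0) (h : x * n = 0) : x = 0 := by
  have h1 : (n : R) * algebraMap K R (n : K)⁻¹ = 1 := by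
    rw [← map_natCast (algebraMap K R), ← map_mul, mul_inv_cancel₀ (by exact_mod_cast hn), map_one]
  calc x = x * n * algebraMap K R (n : K)⁻¹ := by rw [mul_assoc, h1, mul_one]
    _ = 0 := by rw [h, zero_mul]

lemma key_zero {K R : Type*} [Field K] [CommRing R] [Algebra K R] (ω : R)
    (A B : Subalgebra K R) (hAB : A ⊓ B = ⊥)
    (hω : ∀ f ∈ A, ∀ c : K, f + c • ω ∈ B → c = 0) (x y z : R) (hxA : x ∈ A) (hxB : x ∈ B)
    (hy : y ∈ A) (hz : z ∈ B) (h : y + ω * x = z) : x = 0 := by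
  have hx : x ∈ A ⊓ B := ⟨hxA, hxB⟩
  rw [hAB, Algebra.mem_bot] at hx
  obtain ⟨c, rfl⟩ := hx
  have := hω y hy c (by rw [Algebra.smul_def, mul_comm, h]; exact hz)
  simp [this]

lemma lin_alg {K R : Type*} [Field K] [CharZero K] [CommRing R] [Algebra K R] (ω : R)
    (A B : Subalgebra K R) (hAB : A ⊓ B = ⊥)
    (hω : ∀ f ∈ A, ∀ c : K, f + c • ω ∈ B → c = 0) (r : ℕ) (a b : ℕ → ℕ → R)
    (ha : ∀ i j, a i j ∈ A) (hb : ∀ i j, b i j ∈ B) (ha0 : ∀ i j, r < j → a i j = 0)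
    (h0 : ∀ j ≤ r, a 0 j + ω * a 0 (j + 1) = b 0 j)
    (hs : ∀ i < r, ∀ j ≤ r, a (i + 1) j + ω * a (i + 1) (j + 1) = b (i + 1) j + ω * b i j)
    (ht : ∑ i ∈ Finset.range (r + 1), a i i = 0) :
    ∀ i ≤ r, ∀ j ≤ r, (i ≤ j → a i j = 0) ∧ (i < j → b i j = 0) := by
  have row : ∀ i, (∀ j ≤ r, i ≤ j → a i j + ω * a i (j + 1) = b i j) →
      ∀ n j, j + n = r + 1 → i < j → a i j = 0 := by
    intro i hi n
    induction n with
    | zero => intro j hj _; exact ha0 i j (by omega)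
    | succ n ih =>
      intro j hj hij
      have h1 := ih (j + 1) (by omega) (by omega)
      have h2 := hi j (by omega) (by omega)
      rw [h1, mul_zero, add_zero] at h2
      have h3 := hi (j - 1) (by omega) (by omega)
      rw [Nat.sub_add_cancel (by omega)] at h3
      exact key_zero ω A B hAB hω _ _ _ (ha i j) (h2 ▸ hb i j) (ha i (j - 1)) (hb i (j - 1)) h3
  have eqs : ∀ i ≤ r, (∀ j ≤ r, i ≤ j → a i j + ω * a i (j + 1) = b i j) ∧
      (∀ j ≤ r, i < j → b i j = 0) := by
    intro i
    induction i with
    | zero =>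
      intro _
      have hE : ∀ j ≤ r, 0 ≤ j → a 0 j + ω * a 0 (j + 1) = b 0 j := fun j hj _ => h0 j hj
      refine ⟨hE, fun j hj hij => ?_⟩
      rw [← hE j hj hij.le, row 0 hE (r + 1 - j) j (by omega) hij,
        row 0 hE (r + 1 - (j + 1)) (j + 1) (by omega) (by omega)]
      simp
    | succ i ih =>
      intro hir
      obtain ⟨_, ih2⟩ := ih (by omega)
      have hE : ∀ j ≤ r, i + 1 ≤ j → a (i + 1) j + ω * a (i + 1) (j + 1) = b (i + 1) j := by
        intro j hj hij
        rw [hs i (by omega) j hj, ih2 j hj (by omega)]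
        simp
      refine ⟨hE, fun j hj hij => ?_⟩
      rw [← hE j hj hij.le, row _ hE (r + 1 - j) j (by omega) hij,
        row _ hE (r + 1 - (j + 1)) (j + 1) (by omega) (by omega)]
      simp
  have hdiag : ∀ i ≤ r, a i i = b i i := by
    intro i hi
    have := (eqs i hi).1 i hi le_rfl
    rwa [row i (eqs i hi).1 (r + 1 - (i + 1)) (i + 1) (by omega) (by omega), mul_zero,
      add_zero] at this
  have hconst : ∀ i ≤ r, a i i = a 0 0 := by
    intro i
    induction i with
    | zero => intro _; rfl
    | succ i ih =>
      intro hi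
      rw [← ih (by omega)]
      have h1 := hs i (by omega) i (by omega)
      have e1 := hdiag i (by omega)
      have e2 := hdiag (i + 1) hi
      refine sub_eq_zero.mp (key_zero ω A B hAB hω _ (a (i + 1) i) (b (i + 1) i)
        (A.sub_mem (ha _ _) (ha _ _)) ?_ (ha _ _) (hb _ _) ?_)
      · rw [e1, e2]; exact B.sub_mem (hb _ _) (hb _ _)
      · rw [mul_sub, e1]
        linear_combination h1
  have h00 : a 0 0 = 0 := by
    rw [Finset.sum_congr rfl (fun i hi => hconst i (by simp at hi; omega))] at ht
    refine nat_mul_zero K _ (r + 1) (by omega) ?_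
    simpa [mul_comm] using ht
  intro i hi j hj
  refine ⟨fun hij => ?_, (eqs i hi).2 j hj⟩
  rcases hij.eq_or_lt with rfl | hlt
  · rw [hconst i hi, h00]
  · exact row i (eqs i hi).1 (r + 1 - j) j (by omega) hlt

lemma al_mem {K R : Type*} [Field K] [CommRing R] [Algebra K R] (A : Subalgebra K R)
    {r d : ℕ} (p : MvPolynomial (Fin (r + 1)) R) (hp : p.IsHomogeneous d)
    (hA : ∀ m, coeff m p ∈ A) (j : Fin (r + 1)) : al j p ∈ A := by
  rw [al_hom p hp]
  exact A.mul_mem (hA _) (natCast_mem A _)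

lemma div_coeff_mem {K R : Type*} [Field K] [CommRing R] [Algebra K R] (A : Subalgebra K R)
    {r : ℕ} (F : Fin (r + 1) → MvPolynomial (Fin (r + 1)) R)
    (hA : ∀ i m, coeff m (F i) ∈ A) (m : Fin (r + 1) →₀ ℕ) :
    coeff m (∑ i, pderiv i (F i)) ∈ A := by
  rw [coeff_sum]
  refine A.sum_mem fun i _ => ?_
  rw [coeff_pderiv]
  exact A.mul_mem (hA _ _) (A.add_mem (natCast_mem A _) A.one_mem)

/-- The divergence has zero leading coefficient. -/
lemma trace_zero {K R : Type*} [Field K] [CharZero K] [CommRing R] [Algebra K R]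
    (r : ℕ) (hr : 1 ≤ r) (ω : R)
    (A B : Subalgebra K R) (hAB : A ⊓ B = ⊥)
    (hω : ∀ f ∈ A, ∀ c : K, f + c • ω ∈ B → c = 0)
    (d : ℕ) (hd : 1 ≤ d) (H H' : MvPolynomial (Fin (r + 1)) R)
    (hH : H.IsHomogeneous d) (hH' : H'.IsHomogeneous d)
    (hA : ∀ m, coeff m H ∈ A) (hB : ∀ m, coeff m H' ∈ B) (h : sigmaOmega ω H = H') :
    eval (Pi.single (Fin.last r) 1) H = 0 := by
  have h1 := al_sigma ω (Fin.last r) H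
  rw [h, dif_neg (by simp), mul_zero, add_zero] at h1
  have h2 := al_sigma ω ⟨r - 1, by omega⟩ H
  have h3 : (⟨r - 1 + 1, by omega⟩ : Fin (r + 1)) = Fin.last r := Fin.ext (by simp; omega)
  rw [h, dif_pos (by simp; omega)] at h2
  simp only [h3] at h2
  have h4 : al (Fin.last r) H = 0 :=
    key_zero ω A B hAB hω _ _ _ (al_mem A H hH hA _) (h1 ▸ al_mem B H' hH' hB _)
      (al_mem A H hH hA _) (al_mem B H' hH' hB _) h2.symm
  rw [al_hom H hH] at h4
  have h5 := nat_mul_zero K _ _ (by omega) h4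
  rw [eval_hom H hH, ← h5, ← Finsupp.single_add, Nat.sub_add_cancel hd]

theorem stmt7 {K R : Type*} [Field K] [CharZero K] [CommRing R] [Algebra K R]
    (r : ℕ) (hr : 1 ≤ r) (ω : R)
    (A B : Subalgebra K R) (hAB : A ⊓ B = ⊥)
    (hω : ∀ f ∈ A, ∀ c : K, f + c • ω ∈ B → c = 0)
    (d : ℕ) (hd : 2 ≤ d)
    (F G : Fin (r + 1) → MvPolynomial (Fin (r + 1)) R)
    (hFhom : ∀ i, (F i).IsHomogeneous d) (hGhom : ∀ i, (G i).IsHomogeneous d)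
    (hFA : ∀ i, ∀ m : Fin (r + 1) →₀ ℕ, MvPolynomial.coeff m (F i) ∈ A)
    (hGB : ∀ i, ∀ m : Fin (r + 1) →₀ ℕ, MvPolynomial.coeff m (G i) ∈ B)
    (hcomp0 : sigmaOmega ω (F 0) = G 0)
    (hcomp : ∀ i : Fin (r + 1), 1 ≤ i.1 →
      sigmaOmega ω (F i) = G i + MvPolynomial.C ω *
        G ⟨i.1 - 1, lt_of_le_of_lt (Nat.sub_le _ _) i.isLt⟩) :
    (∀ i j : Fin (r + 1), i ≤ j →
      MvPolynomial.coeff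
        (Finsupp.single (Fin.last r) (d - 1) + Finsupp.single j 1) (F i) = 0) ∧
    (∀ i j : Fin (r + 1), i.1 + 1 ≤ j.1 →
      MvPolynomial.coeff
        (Finsupp.single (Fin.last r) (d - 1) + Finsupp.single j 1) (G i) = 0) := by
  have hall : ∀ i, sigmaOmega ω (F i) = G i + if i.1 = 0 then 0 else
      C ω * G ⟨i.1 - 1, lt_of_le_of_lt (Nat.sub_le _ _) i.isLt⟩ := by
    intro i
    split_ifs with h
    · have : i = 0 := Fin.ext h
      rw [this, hcomp0, add_zero]
    · exact hcomp i (by omega)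
  have hdiv := div_sigma r ω F G (fun i => by rw [hall, sum_sigMat_left r ω i C])
  have htr := trace_zero r hr ω A B hAB hω (d - 1) (by omega) _ _
    (IsHomogeneous.sum _ _ _ fun i _ => (hFhom i).pderiv)
    (IsHomogeneous.sum _ _ _ fun i _ => (hGhom i).pderiv)
    (div_coeff_mem A F hFA) (div_coeff_mem B G hGB) hdiv
  rw [map_sum] at htr
  let ext (P : Fin (r + 1) → MvPolynomial (Fin (r + 1)) R) (i j : ℕ) : R :=
    if h : i < r + 1 ∧ j < r + 1 then al ⟨j, h.2⟩ (P ⟨i, h.1⟩) else 0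
  have hext : ∀ (P : Fin (r + 1) → MvPolynomial (Fin (r + 1)) R) (i j : Fin (r + 1)),
      ext P i.1 j.1 = al j (P i) := fun P i j => dif_pos ⟨i.2, j.2⟩
  have hext' : ∀ (P : Fin (r + 1) → MvPolynomial (Fin (r + 1)) R) (i j : Fin (r + 1)),
      ext P i.1 (j.1 + 1) = if h : j.1 + 1 < r + 1 then al ⟨j.1 + 1, h⟩ (P i) else 0 := by
    intro P i j
    simp only [ext]
    split_ifs <;> first | rfl | omega
  have hrow : ∀ i j : Fin (r + 1), ext F i.1 j.1 + ω * ext F i.1 (j.1 + 1) =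
      ext G i.1 j.1 + if i.1 = 0 then 0 else ω * ext G (i.1 - 1) j.1 := by
    intro i j
    rw [hext, hext', ← al_sigma, hall, hext]
    have := hext G ⟨i.1 - 1, lt_of_le_of_lt (Nat.sub_le _ _) i.isLt⟩ j
    simp only at this
    rw [this]
    unfold al
    split_ifs
    · simp
    · rw [map_add, map_add, pderiv_C_mul, map_mul, eval_C]
  have main := lin_alg ω A B hAB hω r (ext F) (ext G)
    (fun i j => by
      simp only [ext]
      split_ifs
      · exact al_mem A _ (hFhom _) (hFA _) _
      · exact A.zero_mem)
    (fun i j => by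
      simp only [ext]
      split_ifs
      · exact al_mem B _ (hGhom _) (hGB _) _
      · exact B.zero_mem)
    (fun i j hj => dif_neg (by omega))
    (fun j hj => by simpa using hrow 0 ⟨j, by omega⟩)
    (fun i hi j hj => by simpa using hrow ⟨i + 1, by omega⟩ ⟨j, by omega⟩)
    (by
      rw [Finset.sum_range, ← htr]
      exact Finset.sum_congr rfl fun i _ => hext F i i)
  constructor
  · intro i j hij
    have h := (main i.1 (by omega) j.1 (by omega)).1 hij
    rw [hext, al_hom _ (hFhom i)] at h
    exact nat_mul_zero K _ _ (by omega) h
  · intro i j hij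
    have h := (main i.1 (by omega) j.1 (by omega)).2 hij
    rw [hext, al_hom _ (hGhom i)] at h
    exact nat_mul_zero K _ _ (by omega) h
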